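/- (Quantitative version of Lemma 5.6) Let u : Θ → ℝ be bounded and d_p-uniformly continuous with modulus ρ^u. Then there exists a constant C, depending only on T, p and ‖u‖_∞, such that for every n ≥ 1, every i ≤ n^{1+1/(5p)}, every partition 0 = s_1 < ⋯ < s_i ≤ T and all x_1,…,x_{i−1}, x ∈ ℝ^d with |x_i|_p ≤ n^{1/2+6/(5p)} (where x_i := (x_1,…,x_{i−1},x)): 0 ≤ u^{n,λ_i}(T,x) − u^{λ_i}(T,x) ≤ ρ^u( C ( n^{−(3p+3)/2} + n^{−1/(p+1)} + n^{−1/(10p)} ) ). -/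

import Mathlib

open MeasureTheory Set Filter Topology

noncomputable section

/-- `ℝ^d` with the Euclidean norm. -/
abbrev E (d : ℕ) := EuclideanSpace ℝ (Fin d)

/-- A point `θ = (t, ω)` of `Θ = [0,T] × Ω`, where `Ω` is the set of continuous
paths `[0,T] → ℝ^d` starting from the origin. -/
structure Theta (T : ℝ) (d : ℕ) where
  t : ℝ
  path : ℝ → E d
  ht : t ∈ Set.Icc 0 T
  cont : ContinuousOn path (Set.Icc 0 T)
  init : path 0 = 0

/-- `‖f‖_q^q := ‖f T‖^q + ∫_0^T ‖f s‖^q ds`. -/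
def pnormPow (T q : ℝ) {d : ℕ} (f : ℝ → E d) : ℝ :=
  ‖f T‖ ^ q + ∫ s in (0:ℝ)..T, ‖f s‖ ^ q

/-- `‖f‖_q := (‖f T‖^q + ∫_0^T ‖f s‖^q ds)^(1/q)`. -/
def pnorm (T q : ℝ) {d : ℕ} (f : ℝ → E d) : ℝ := (pnormPow T q f) ^ (1 / q)

/-- The pseudo-distance `d_p(θ,θ') = |t - t'| + ‖ω_{t∧·} - ω'_{t'∧·}‖_p`. -/
def dpDist (T p : ℝ) {d : ℕ} (θ θ' : Theta T d) : ℝ :=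
  |θ.t - θ'.t| + pnorm T p (fun s => θ.path (min θ.t s) - θ'.path (min θ'.t s))

/-- The set `𝓛_{t,s}` of monotone time changes: for `s > 0`, nondecreasing
`ℓ : [0,T] → ℝ` restricting to an increasing bijection from `[0,t]` onto `[0,s]`
with `ℓ(r) = r - t + s` on `(t,T]`; for `s = 0` the single function `ℓ^{t,0}`. -/
def LL (T t s : ℝ) : Set (ℝ → ℝ) :=
  if s = 0 then {fun r => if r ≤ t then 0 else r - t}
  else {ℓ | MonotoneOn ℓ (Set.Icc 0 T) ∧ StrictMonoOn ℓ (Set.Icc 0 t) ∧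
        Set.BijOn ℓ (Set.Icc 0 t) (Set.Icc 0 s) ∧ ∀ r ∈ Set.Ioc t T, ℓ r = r - t + s}

/-- `‖ℓ - I‖_∞ := sup_{0 ≤ r ≤ T} |ℓ(r) - r|`. -/
def supId (T : ℝ) (ℓ : ℝ → ℝ) : ℝ := ⨆ r : Set.Icc (0:ℝ) T, |ℓ r - (r : ℝ)|

/-- The penalization `Φ(s,η,θ,ℓ) := ‖ℓ - I‖_∞^{2/(3p+3)} + ‖η_{s∧ℓ(·)} - ω_{t∧·}‖_{p+1}^{p+1}`. -/
def Phi (T p : ℝ) {d : ℕ} (s : ℝ) (η : ℝ → E d) (θ : Theta T d) (ℓ : ℝ → ℝ) : ℝ :=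
  (supId T ℓ) ^ (2 / (3 * p + 3)) +
    pnormPow T (p + 1) (fun r => η (min s (ℓ r)) - θ.path (min θ.t r))

/-- The regularization
`u^n(s,η) := sup { u(θ) - n Φ(s,η,θ,ℓ) : θ ∈ Θ \ {𝟎}, ℓ ∈ 𝓛_{t,s} }`. -/
def reg (T p : ℝ) {d : ℕ} (u : Theta T d → ℝ) (n : ℕ) (s : ℝ) (η : ℝ → E d) : ℝ :=
  sSup { x | ∃ θ : Theta T d, ∃ ℓ : ℝ → ℝ, (θ.t, θ.path) ≠ (0, 0) ∧ ℓ ∈ LL T θ.t s ∧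
        x = u θ - (n : ℝ) * Phi T p s η θ ℓ }

/-- A càdlàg path on `[0,T]`: right-continuous with left limits. -/
def Cadlag (T : ℝ) {d : ℕ} (η : ℝ → E d) : Prop :=
  (∀ x ∈ Set.Ico (0:ℝ) T, ContinuousWithinAt η (Set.Ici x) x) ∧
  (∀ x ∈ Set.Ioc (0:ℝ) T, ∃ l : E d, Filter.Tendsto η (nhdsWithin x (Set.Iio x)) (𝓝 l))

/-- The piecewise constant path `η^{λ_i}(x)_s = Σ_j x_j 1_{{s ≥ s_j}}`. -/
def pcPath {d i : ℕ} (sVec : Fin i → ℝ) (xVec : Fin i → E d) : ℝ → E d :=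
  fun r => ∑ j : Fin i, if sVec j ≤ r then xVec j else 0

/-- `L = u^{λ_i}(T,x)`, i.e. `L` is the limit of `u(T, ω^k)` along a sequence of
continuous paths `ω^k ∈ Ω` with `‖η^{λ_i}(x) - ω^k‖_p → 0`. -/
def IsExtValue (T p : ℝ) {d : ℕ} (u : Theta T d → ℝ) (η : ℝ → E d) (L : ℝ) : Prop :=
  ∃ θk : ℕ → Theta T d, (∀ k, (θk k).t = T) ∧
    Filter.Tendsto (fun k => pnorm T p (fun r => η r - (θk k).path r)) Filter.atTop (𝓝 0) ∧
    Filter.Tendsto (fun k => u (θk k)) Filter.atTop (𝓝 L)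

def muT (T : ℝ) : Measure ℝ := volume.restrict (Ioc 0 T) + Measure.dirac T

instance (T : ℝ) : IsFiniteMeasure (muT T) := by unfold muT; infer_instance

def Good (T : ℝ) {d : ℕ} (f : ℝ → E d) : Prop :=
  AEStronglyMeasurable f (volume.restrict (Ioc 0 T)) ∧ ∃ B, ∀ r ∈ Ioc 0 T, ‖f r‖ ≤ B

lemma Good.sub {T : ℝ} {d : ℕ} {f g : ℝ → E d} (hf : Good T f) (hg : Good T g) :
    Good T (fun r => f r - g r) := by
  obtain ⟨h1, B, hB⟩ := hf
  obtain ⟨h2, B', hB'⟩ := hg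
  exact ⟨h1.sub h2, B + B', fun r hr => (norm_sub_le _ _).trans (add_le_add (hB r hr) (hB' r hr))⟩

lemma Good.aesm {T : ℝ} {d : ℕ} {f : ℝ → E d} (hf : Good T f) :
    AEStronglyMeasurable f (muT T) := by
  unfold muT
  rw [aestronglyMeasurable_add_measure_iff]
  exact ⟨hf.1, aestronglyMeasurable_dirac⟩

lemma ae_muT {T : ℝ} (hT : 0 < T) {P : ℝ → Prop} (h : ∀ r ∈ Ioc 0 T, P r) :
    ∀ᵐ r ∂(muT T), P r := by
  unfold muT
  rw [ae_add_measure_iff]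
  refine ⟨(ae_restrict_iff' measurableSet_Ioc).2 (Eventually.of_forall h), ?_⟩
  rw [ae_dirac_eq]
  exact h T ⟨hT, le_rfl⟩

lemma Good.memLp {T : ℝ} (hT : 0 < T) {d : ℕ} {f : ℝ → E d} (hf : Good T f) (q : ENNReal) :
    MemLp f q (muT T) := by
  obtain ⟨B, hB⟩ := hf.2
  exact MemLp.of_bound hf.aesm B (ae_muT hT hB)

lemma pnormPow_eq {T : ℝ} (hT : 0 < T) {d : ℕ} {f : ℝ → E d} (hf : Good T f) {q : ℝ} (hq : 0 < q) :
    pnormPow T q f = ∫ r, ‖f r‖ ^ q ∂(muT T) := by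
  have hi : Integrable (fun r => ‖f r‖ ^ q) (muT T) := by
    have := (hf.memLp hT (ENNReal.ofReal q)).integrable_norm_rpow'
    simpa [ENNReal.toReal_ofReal hq.le] using this
  have hi' := hi
  unfold muT at hi'
  rw [integrable_add_measure] at hi'
  unfold muT pnormPow
  rw [integral_add_measure hi'.1 hi'.2, integral_dirac, intervalIntegral.integral_of_le hT.le, add_comm]

lemma pnorm_eq {T : ℝ} (hT : 0 < T) {d : ℕ} {f : ℝ → E d} (hf : Good T f) {q : ℝ} (hq : 0 < q) :
    pnorm T q f = (eLpNorm f (ENNReal.ofReal q) (muT T)).toReal := by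
  rw [(hf.memLp hT (ENNReal.ofReal q)).eLpNorm_eq_integral_rpow_norm (by simpa using hq) (by simp)]
  unfold pnorm
  rw [pnormPow_eq hT hf hq, ENNReal.toReal_ofReal hq.le, ENNReal.toReal_ofReal (by positivity), one_div]

lemma pnorm_triangle {T : ℝ} (hT : 0 < T) {d : ℕ} {f g h : ℝ → E d} (hf : Good T f) (hg : Good T g)
    (hh : Good T h) {q : ℝ} (hq : 1 ≤ q) :
    pnorm T q (fun r => f r - h r) ≤ pnorm T q (fun r => f r - g r) + pnorm T q (fun r => g r - h r) := by
  have hq0 : 0 < q := by linarith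
  rw [pnorm_eq hT (hf.sub hh) hq0, pnorm_eq hT (hf.sub hg) hq0, pnorm_eq hT (hg.sub hh) hq0]
  have h1 := ((hf.sub hg).memLp hT (ENNReal.ofReal q))
  have h2 := ((hg.sub hh).memLp hT (ENNReal.ofReal q))
  have := eLpNorm_add_le h1.1 h2.1 (p := ENNReal.ofReal q) (by simpa using hq)
  have e : (fun r => f r - g r) + (fun r => g r - h r) = fun r => f r - h r := by
    ext r; simp
  rw [e] at this
  rw [← ENNReal.toReal_add h1.2.ne h2.2.ne]
  exact ENNReal.toReal_mono (ENNReal.add_ne_top.2 ⟨h1.2.ne, h2.2.ne⟩) this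

lemma pnorm_symm {T q : ℝ} {d : ℕ} (f g : ℝ → E d) :
    pnorm T q (fun r => f r - g r) = pnorm T q (fun r => g r - f r) := by
  unfold pnorm pnormPow
  simp only [norm_sub_rev]

lemma pnormPow_nonneg {T q : ℝ} (hT : 0 < T) {d : ℕ} (f : ℝ → E d) : 0 ≤ pnormPow T q f := by
  unfold pnormPow
  have : 0 ≤ ∫ s in (0:ℝ)..T, ‖f s‖ ^ q :=
    intervalIntegral.integral_nonneg hT.le (fun s _ => by positivity)
  positivity

lemma pnorm_congr {T q : ℝ} (hT : 0 < T) {d : ℕ} {f g : ℝ → E d} (h : ∀ r ∈ Ioc 0 T, f r = g r) :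
    pnorm T q f = pnorm T q g := by
  unfold pnorm pnormPow
  rw [h T ⟨hT, le_rfl⟩, intervalIntegral.integral_of_le hT.le, intervalIntegral.integral_of_le hT.le]
  rw [setIntegral_congr_fun (g := fun s => ‖g s‖ ^ q) measurableSet_Ioc
    (fun r hr => by simp only [h r hr])]

lemma pnorm_holder {T : ℝ} (hT : 0 < T) {p : ℝ} (hp : 1 ≤ p) : ∃ H : ℝ, 0 ≤ H ∧
    ∀ {d : ℕ} {f : ℝ → E d}, Good T f → pnorm T p f ≤ H * pnorm T (p + 1) f := by
  refine ⟨((muT T univ) ^ (1 / p - 1 / (p+1))).toReal, ENNReal.toReal_nonneg, fun {d f} hf => ?_⟩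
  rw [pnorm_eq hT hf (by linarith), pnorm_eq hT hf (by linarith), mul_comm, ← ENNReal.toReal_mul]
  have := eLpNorm_le_eLpNorm_mul_rpow_measure_univ (p := ENNReal.ofReal p)
    (q := ENNReal.ofReal (p+1)) (ENNReal.ofReal_le_ofReal (by linarith)) hf.aesm
  rw [ENNReal.toReal_ofReal (by linarith), ENNReal.toReal_ofReal (by linarith)] at this
  refine ENNReal.toReal_mono (ENNReal.mul_ne_top (hf.memLp hT _).2.ne ?_) this
  refine ENNReal.rpow_ne_top_of_nonneg ?_ (measure_ne_top _ _)
  rw [sub_nonneg]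
  exact one_div_le_one_div_of_le (by linarith) (by linarith)

lemma good_of_continuousOn {T : ℝ} {d : ℕ} {f : ℝ → E d} (hf : ContinuousOn f (Icc 0 T)) :
    Good T f := by
  refine ⟨(hf.mono Ioc_subset_Icc_self).aestronglyMeasurable measurableSet_Ioc, ?_⟩
  obtain ⟨B, hB⟩ := isCompact_Icc.exists_bound_of_continuousOn hf
  exact ⟨B, fun r hr => hB r (Ioc_subset_Icc_self hr)⟩

lemma good_theta {T : ℝ} {d : ℕ} (θ : Theta T d) : Good T (fun r => θ.path (min θ.t r)) := by
  apply good_of_continuousOn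
  refine θ.cont.comp (by fun_prop) (fun r hr => ⟨le_min θ.ht.1 hr.1, (min_le_left _ _).trans θ.ht.2⟩)

lemma good_pc {T : ℝ} {d i : ℕ} (s : Fin i → ℝ) (x : Fin i → E d) {g : ℝ → ℝ}
    (hg : MonotoneOn g (Icc 0 T)) : Good T (fun r => pcPath s x (g r)) := by
  have hgm : AEMeasurable g (volume.restrict (Ioc 0 T)) :=
    aemeasurable_restrict_of_monotoneOn measurableSet_Ioc (hg.mono Ioc_subset_Icc_self)
  refine ⟨?_, ∑ j, ‖x j‖, fun r _ => ?_⟩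
  · have : Measurable (pcPath s x) := by
      unfold pcPath
      refine Finset.measurable_sum _ (fun j _ => ?_)
      exact Measurable.ite measurableSet_Ici measurable_const measurable_const
    exact (this.comp_aemeasurable hgm).aestronglyMeasurable
  · unfold pcPath
    refine (norm_sum_le _ _).trans (Finset.sum_le_sum fun j _ => ?_)
    split_ifs <;> simp

lemma pc_diff {d m : ℕ} (s : Fin (m+1) → ℝ) (x : Fin (m+1) → E d) {p δ a b : ℝ} (hp : 1 ≤ p)
    (h : |a - b| ≤ δ) : ‖pcPath s x a - pcPath s x b‖ ^ p ≤
      ((m:ℝ)+1)^(p-1) * ∑ j, ‖x j‖ ^ p * (Icc (s j - δ) (s j + δ)).indicator (fun _ => (1:ℝ)) b := by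
  have h0 := abs_le.1 h
  have h1 : ‖pcPath s x a - pcPath s x b‖ ≤
      ∑ j, |‖x j‖ * (Icc (s j - δ) (s j + δ)).indicator (fun _ => (1:ℝ)) b| := by
    unfold pcPath
    rw [← Finset.sum_sub_distrib]
    refine (norm_sum_le _ _).trans (Finset.sum_le_sum fun j _ => ?_)
    by_cases hb : b ∈ Icc (s j - δ) (s j + δ)
    · simp only [indicator_of_mem hb, mul_one, abs_norm]
      split_ifs <;> simp
    · have : (s j ≤ a) ↔ (s j ≤ b) := by
        simp only [mem_Icc, not_and_or, not_le] at hb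
        constructor <;> intro <;> rcases hb with hb | hb <;> linarith
      simp only [this, sub_self, norm_zero]
      exact abs_nonneg _
  refine (Real.rpow_le_rpow (norm_nonneg _) h1 (by linarith)).trans ?_
  refine (Real.rpow_sum_le_const_mul_sum_rpow Finset.univ _ hp).trans (le_of_eq ?_)
  simp only [Finset.card_univ, Fintype.card_fin]
  push_cast
  congr 1
  refine Finset.sum_congr rfl fun j _ => ?_
  by_cases hb : b ∈ Icc (s j - δ) (s j + δ)
  · simp [indicator_of_mem hb]
  · simp [indicator_of_notMem hb, Real.zero_rpow (by linarith : p ≠ 0)]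

lemma pc_shift {T : ℝ} (hT : 0 < T) {d m : ℕ} (s : Fin (m+1) → ℝ) (x : Fin (m+1) → E d)
    {p δ : ℝ} (hp : 1 ≤ p) (hδ0 : 0 ≤ δ) {g : ℝ → ℝ} (hg : MonotoneOn g (Icc 0 T)) (hgT : g T = T)
    (hδ : ∀ r ∈ Ioc 0 T, |g r - r| ≤ δ) :
    pnormPow T p (fun r => pcPath s x (g r) - pcPath s x r) ≤
      ((m:ℝ)+1)^(p-1) * ((∑ j, ‖x j‖ ^ p) * (2 * δ)) := by
  unfold pnormPow
  simp only [hgT, sub_self, norm_zero, Real.zero_rpow (by linarith : p ≠ 0), zero_add]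
  rw [intervalIntegral.integral_of_le hT.le]
  have hI : ∀ j, Integrable ((Icc (s j - δ) (s j + δ)).indicator (fun _ => (1:ℝ)))
      (volume.restrict (Ioc 0 T)) := fun j =>
    (integrable_const (1:ℝ)).indicator measurableSet_Icc
  have hI2 : Integrable (fun r => ((m:ℝ)+1)^(p-1) * ∑ j, ‖x j‖ ^ p *
      (Icc (s j - δ) (s j + δ)).indicator (fun _ => (1:ℝ)) r) (volume.restrict (Ioc 0 T)) := by
    refine Integrable.const_mul (integrable_finsetSum _ fun j _ => (hI j).const_mul _) _
  calc _ ≤ ∫ r in Ioc 0 T, ((m:ℝ)+1)^(p-1) * ∑ j, ‖x j‖ ^ p *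
      (Icc (s j - δ) (s j + δ)).indicator (fun _ => (1:ℝ)) r := by
        refine integral_mono_of_nonneg (Eventually.of_forall fun r => by positivity) hI2 ?_
        exact (ae_restrict_iff' measurableSet_Ioc).2
          (Eventually.of_forall fun r hr => pc_diff s x hp (hδ r hr))
    _ = ((m:ℝ)+1)^(p-1) * ∑ j, ‖x j‖ ^ p *
      ∫ r in Ioc 0 T, (Icc (s j - δ) (s j + δ)).indicator (fun _ => (1:ℝ)) r := by
        rw [integral_const_mul, integral_finsetSum _ fun j _ => (hI j).const_mul _]
        simp only [integral_const_mul]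
    _ ≤ _ := by
        rw [Finset.sum_mul]
        gcongr with j
        rw [integral_indicator measurableSet_Icc]
        simp only [integral_const, smul_eq_mul, mul_one, measureReal_restrict_apply_univ]
        rw [measureReal_restrict_apply measurableSet_Icc]
        refine (measureReal_mono inter_subset_left (by simp)).trans ?_
        rw [Real.volume_real_Icc_of_le (by linarith)]
        linarith

lemma supId_nonneg (T : ℝ) (ℓ : ℝ → ℝ) : 0 ≤ supId T ℓ :=
  Real.iSup_nonneg fun _ => abs_nonneg _

lemma le_supId {T : ℝ} {ℓ : ℝ → ℝ} (h : MonotoneOn ℓ (Icc 0 T)) {r : ℝ} (hr : r ∈ Icc 0 T) :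
    |ℓ r - r| ≤ supId T ℓ := by
  have hb : BddAbove (range fun r : Icc (0:ℝ) T => |ℓ r - (r:ℝ)|) := by
    refine ⟨|ℓ 0| + |ℓ T| + T, ?_⟩
    rintro _ ⟨⟨y, hy⟩, rfl⟩
    have hT : 0 ≤ T := hy.1.trans hy.2
    have h1 := h ⟨le_rfl, hT⟩ hy hy.1
    have h2 := h hy ⟨hT, le_rfl⟩ hy.2
    have := neg_abs_le (ℓ 0)
    have := le_abs_self (ℓ T)
    have := abs_nonneg (ℓ 0)
    have := abs_nonneg (ℓ T)
    have := hy.1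
    have := hy.2
    simp only
    rw [abs_le]
    constructor <;> linarith
  exact le_ciSup hb ⟨r, hr⟩

lemma Phi_nonneg {T : ℝ} (hT : 0 < T) (p : ℝ) {d : ℕ} (s : ℝ) (η : ℝ → E d) (θ : Theta T d)
    (ℓ : ℝ → ℝ) : 0 ≤ Phi T p s η θ ℓ :=
  add_nonneg (Real.rpow_nonneg (supId_nonneg _ _) _) (pnormPow_nonneg hT _)

def apath {d i : ℕ} (s : Fin i → ℝ) (x : Fin i → E d) (k : ℕ) : ℝ → E d := fun r =>
  (min 1 (((k:ℝ)+1) * r)) • ∑ j, (max 0 (min 1 (((k:ℝ)+1) * (r - s j) + 1))) • x j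

def atheta {T : ℝ} (hT : 0 < T) {d i : ℕ} (s : Fin i → ℝ) (x : Fin i → E d) (k : ℕ) : Theta T d where
  t := T
  path := apath s x k
  ht := ⟨hT.le, le_rfl⟩
  cont := by
    apply Continuous.continuousOn
    unfold apath
    fun_prop
  init := by simp [apath]

lemma apath_bound {d i : ℕ} (s : Fin i → ℝ) (x : Fin i → E d) (k : ℕ) {r : ℝ} (hr : 0 < r) :
    ‖apath s x k r‖ ≤ ∑ j, ‖x j‖ := by
  unfold apath
  rw [norm_smul]
  have h1 : ‖min 1 (((k:ℝ)+1) * r)‖ ≤ 1 := by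
    rw [Real.norm_of_nonneg (le_min zero_le_one (by positivity))]
    exact min_le_left _ _
  have h2 : ‖∑ j, (max 0 (min 1 (((k:ℝ)+1) * (r - s j) + 1))) • x j‖ ≤ ∑ j, ‖x j‖ := by
    refine (norm_sum_le _ _).trans (Finset.sum_le_sum fun j _ => ?_)
    rw [norm_smul, Real.norm_of_nonneg (le_max_left _ _)]
    exact mul_le_of_le_one_left (norm_nonneg _) (max_le zero_le_one (min_le_left _ _))
  calc _ ≤ 1 * ∑ j, ‖x j‖ := mul_le_mul h1 h2 (norm_nonneg _) zero_le_one
    _ = _ := one_mul _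

lemma ev_large {a : ℝ} (ha : 0 < a) : ∀ᶠ k : ℕ in atTop, 1 ≤ ((k:ℝ)+1) * a := by
  have : Tendsto (fun k : ℕ => ((k:ℝ)+1) * a) atTop atTop :=
    (tendsto_atTop_add_const_right _ _ tendsto_natCast_atTop_atTop).atTop_mul_const ha
  exact this.eventually_ge_atTop 1

lemma apath_ev {d i : ℕ} (s : Fin i → ℝ) (x : Fin i → E d) {r : ℝ} (hr : 0 < r) :
    ∀ᶠ k : ℕ in atTop, apath s x k r = pcPath s x r := by
  have h2 : ∀ᶠ k : ℕ in atTop, ∀ j, r < s j → 1 ≤ ((k:ℝ)+1) * (s j - r) := by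
    rw [eventually_all]
    intro j
    by_cases h : r < s j
    · filter_upwards [ev_large (sub_pos.2 h)] with k hk _ using hk
    · exact Eventually.of_forall fun k hk => absurd hk h
  filter_upwards [ev_large hr, h2] with k hk1 hk2
  unfold apath pcPath
  rw [min_eq_left hk1, one_smul]
  refine Finset.sum_congr rfl fun j _ => ?_
  split_ifs with h
  · have : 0 ≤ ((k:ℝ)+1) * (r - s j) := mul_nonneg (by positivity) (by linarith)
    rw [min_eq_left (by linarith), max_eq_right zero_le_one, one_smul]
  · have := hk2 j (not_le.1 h)
    rw [max_eq_left, zero_smul]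
    refine (min_le_right _ _).trans ?_
    linarith

lemma good_pc' {T : ℝ} {d i : ℕ} (s : Fin i → ℝ) (x : Fin i → E d) : Good T (pcPath s x) :=
  good_pc s x (g := id) monotoneOn_id

lemma good_path {T : ℝ} {d : ℕ} (θ : Theta T d) : Good T θ.path := good_of_continuousOn θ.cont

lemma apath_tendsto {T : ℝ} (hT : 0 < T) {d i : ℕ} (s : Fin i → ℝ) (x : Fin i → E d) {q : ℝ}
    (hq : 0 < q) :
    Tendsto (fun k => pnormPow T q (fun r => pcPath s x r - apath s x k r)) atTop (𝓝 0) := by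
  have hg : ∀ k, Good T (fun r => pcPath s x r - apath s x k r) := fun k =>
    (good_pc' s x).sub (good_path (atheta hT s x k))
  simp only [fun k => pnormPow_eq hT (hg k) hq]
  have : (0:ℝ) = ∫ r, (0:ℝ) ∂(muT T) := by simp
  rw [this]
  refine tendsto_integral_of_dominated_convergence
    (fun _ => (∑ j, ‖x j‖ + ∑ j, ‖x j‖) ^ q) ?_ (integrable_const _) ?_ ?_
  · intro k
    have := (hg k).aesm.norm
    exact (this.aemeasurable.pow_const q).aestronglyMeasurable
  · intro k
    refine ae_muT hT fun r hr => ?_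
    rw [Real.norm_of_nonneg (by positivity)]
    refine Real.rpow_le_rpow (norm_nonneg _) ((norm_sub_le _ _).trans (add_le_add ?_ ?_)) hq.le
    · unfold pcPath
      refine (norm_sum_le _ _).trans (Finset.sum_le_sum fun j _ => ?_)
      split_ifs <;> simp
    · exact apath_bound s x k hr.1
  · refine ae_muT hT fun r hr => ?_
    refine tendsto_const_nhds.congr' ?_
    filter_upwards [apath_ev s x hr.1] with k hk
    rw [hk]
    simp [Real.zero_rpow hq.ne']

lemma rho_zero {ρ : ℝ → ℝ} (hm : Monotone ρ) (h : Tendsto ρ (nhdsWithin 0 (Ioi 0)) (𝓝 0))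
    (h0 : 0 ≤ ρ 0) {a : ℕ → ℝ} (ha : Tendsto a atTop (𝓝 0)) (ha0 : ∀ k, 0 ≤ a k) :
    Tendsto (fun k => ρ (a k)) atTop (𝓝 0) := by
  have h1 : Tendsto (fun k : ℕ => a k + 1 / ((k:ℝ)+1)) atTop (nhdsWithin 0 (Ioi 0)) := by
    refine tendsto_nhdsWithin_iff.2 ⟨?_, Eventually.of_forall fun k => ?_⟩
    · simpa using ha.add tendsto_one_div_add_atTop_nhds_zero_nat
    · have := ha0 k
      simp only [mem_Ioi]
      positivity
  refine tendsto_of_tendsto_of_tendsto_of_le_of_le tendsto_const_nhds (h.comp h1) ?_ ?_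
  · intro k
    exact h0.trans (hm (ha0 k))
  · intro k
    refine hm ?_
    simp only [le_add_iff_nonneg_right]
    positivity

lemma dp_nonneg {T p : ℝ} (hT : 0 < T) {d : ℕ} (θ θ' : Theta T d) : 0 ≤ dpDist T p θ θ' :=
  add_nonneg (abs_nonneg _) (Real.rpow_nonneg (pnormPow_nonneg hT _) _)

lemma id_mem_LL {T : ℝ} (hT : 0 < T) : (id : ℝ → ℝ) ∈ LL T T T := by
  unfold LL
  rw [if_neg hT.ne']
  refine ⟨monotoneOn_id, strictMonoOn_id, bijOn_id _, fun r hr => ?_⟩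
  exact absurd (hr.1.trans_le hr.2) (lt_irrefl _)

lemma reg_bdd {T : ℝ} (hT : 0 < T) {p : ℝ} {d : ℕ} {u : Theta T d → ℝ} {M : ℝ}
    (hM : ∀ θ, |u θ| ≤ M) (n : ℕ) (s : ℝ) (η : ℝ → E d) :
    BddAbove { x | ∃ θ : Theta T d, ∃ ℓ : ℝ → ℝ, (θ.t, θ.path) ≠ (0, 0) ∧ ℓ ∈ LL T θ.t s ∧
        x = u θ - (n : ℝ) * Phi T p s η θ ℓ } := by
  refine ⟨M, ?_⟩
  rintro _ ⟨θ, ℓ, -, -, rfl⟩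
  have := (abs_le.1 (hM θ)).2
  have := mul_nonneg (Nat.cast_nonneg (α := ℝ) n) (Phi_nonneg hT p s η θ ℓ)
  linarith

lemma lower {T : ℝ} (hT : 0 < T) {p : ℝ} (hp : 1 ≤ p) {d i : ℕ} {u : Theta T d → ℝ} {M : ℝ}
    (hM : ∀ θ, |u θ| ≤ M) {ρ : ℝ → ℝ} (hm : Monotone ρ)
    (h : Tendsto ρ (nhdsWithin 0 (Ioi 0)) (𝓝 0)) (h0 : 0 ≤ ρ 0)
    (hu : ∀ θ θ' : Theta T d, |u θ - u θ'| ≤ ρ (dpDist T p θ θ')) (n : ℕ)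
    (s : Fin i → ℝ) (x : Fin i → E d) {L : ℝ} (hL : IsExtValue T p u (pcPath s x) L) :
    L ≤ reg T p u n T (pcPath s x) := by
  obtain ⟨θk, ht, h1, h2⟩ := hL
  have hp0 : 0 < p := by linarith
  have hA : Tendsto (fun k => pnorm T p (fun r => pcPath s x r - apath s x k r)) atTop (𝓝 0) := by
    have := (apath_tendsto hT s x hp0).rpow_const (p := 1 / p) (Or.inr (by positivity))
    rwa [Real.zero_rpow (by positivity)] at this
  have hd : ∀ k, dpDist T p (atheta hT s x k) (θk k) ≤
      pnorm T p (fun r => pcPath s x r - apath s x k r) +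
      pnorm T p (fun r => pcPath s x r - (θk k).path r) := by
    intro k
    unfold dpDist
    have e : pnorm T p (fun s_1 => (atheta hT s x k).path (min (atheta hT s x k).t s_1) -
        (θk k).path (min (θk k).t s_1)) = pnorm T p (fun r => apath s x k r - (θk k).path r) := by
      refine pnorm_congr hT fun r hr => ?_
      rw [ht k]
      simp [atheta, min_eq_right hr.2]
    rw [e, ht k]
    simp only [atheta, sub_self, abs_zero, zero_add]
    rw [pnorm_symm (pcPath s x) (apath s x k)]
    exact pnorm_triangle hT (good_path (atheta hT s x k)) (good_pc' s x) (good_path _) hp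
  have hd0 : Tendsto (fun k => dpDist T p (atheta hT s x k) (θk k)) atTop (𝓝 0) := by
    refine tendsto_of_tendsto_of_tendsto_of_le_of_le tendsto_const_nhds
      (by simpa using hA.add h1) (fun k => dp_nonneg hT _ _) hd
  have hr := rho_zero hm h h0 hd0 (fun k => dp_nonneg hT _ _)
  have hPhi : ∀ k, Phi T p T (pcPath s x) (atheta hT s x k) id =
      pnormPow T (p+1) (fun r => pcPath s x r - apath s x k r) := by
    intro k
    unfold Phi
    have e1 : supId T id = 0 := by simp [supId]
    rw [e1, Real.zero_rpow (by positivity), zero_add]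
    unfold pnormPow
    simp only [atheta, id, min_self]
    congr 1
    refine intervalIntegral.integral_congr fun r hr => ?_
    rw [uIcc_of_le hT.le] at hr
    simp only [min_eq_right hr.2]
  have hlim : Tendsto (fun k => u (θk k) - ρ (dpDist T p (atheta hT s x k) (θk k)) -
      (n:ℝ) * pnormPow T (p+1) (fun r => pcPath s x r - apath s x k r)) atTop (𝓝 L) := by
    have := (h2.sub hr).sub ((apath_tendsto hT s x (q := p+1) (by linarith)).const_mul (n:ℝ))
    simpa using this
  refine le_of_tendsto' hlim fun k => ?_
  have h3 : u (atheta hT s x k) - (n:ℝ) * Phi T p T (pcPath s x) (atheta hT s x k) id ≤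
      reg T p u n T (pcPath s x) := by
    refine le_csSup (reg_bdd hT hM n T _) ⟨_, id, ?_, id_mem_LL hT, rfl⟩
    intro hh
    exact hT.ne' (congrArg Prod.fst hh)
  rw [hPhi] at h3
  have := (abs_le.1 (hu (atheta hT s x k) (θk k))).1
  linarith

lemma LL_prop {T t : ℝ} (hT : 0 < T) (ht : t ∈ Icc 0 T) {ℓ : ℝ → ℝ} (h : ℓ ∈ LL T t T) :
    MonotoneOn ℓ (Icc 0 T) ∧ ℓ t = T ∧ T ≤ ℓ T := by
  unfold LL at h
  rw [if_neg hT.ne'] at h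
  obtain ⟨h1, h2, h3, h4⟩ := h
  have e : ℓ t = T := by
    obtain ⟨y, hy, hyT⟩ := h3.surjOn (show T ∈ Icc 0 T from ⟨hT.le, le_rfl⟩)
    have a := h2.monotoneOn hy ⟨ht.1, le_rfl⟩ hy.2
    have b := (h3.mapsTo (show t ∈ Icc 0 t from ⟨ht.1, le_rfl⟩)).2
    linarith
  refine ⟨h1, e, ?_⟩
  have := h1 ht ⟨hT.le, le_rfl⟩ ht.2
  linarith

lemma rpow_final {p N K S m1 : ℝ} (hp : 1 ≤ p) (hN : 1 ≤ N) (hK : 0 ≤ K) (hS : 0 ≤ S) (hm0 : 0 ≤ m1)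
    (hm : m1 ≤ N ^ ((1 : ℝ) + 1 / (5 * p)))
    (hx : S ^ (1 / p) ≤ N ^ ((1 : ℝ) / 2 + 6 / (5 * p))) :
    (m1 ^ (p-1) * (S * (2 * (K * N ^ (-((3 * p + 3) / 2)))))) ^ (1 / p) ≤
      (2 * K) ^ (1 / p) * N ^ (-(1 / (10 * p))) := by
  have hN0 : 0 < N := by linarith
  have hp0 : 0 < p := by linarith
  have hS' : S ≤ N ^ (p / 2 + 6 / 5) := by
    have := Real.rpow_le_rpow (by positivity) hx hp0.le
    rw [← Real.rpow_mul hS, ← Real.rpow_mul hN0.le, one_div_mul_cancel hp0.ne', Real.rpow_one] at this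
    refine this.trans (le_of_eq ?_)
    congr 1
    field_simp
  have hm' : m1 ^ (p-1) ≤ N ^ ((1 + 1 / (5 * p)) * (p - 1)) := by
    rw [Real.rpow_mul hN0.le]
    exact Real.rpow_le_rpow hm0 hm (by linarith)
  have h1 : m1 ^ (p-1) * (S * (2 * (K * N ^ (-((3 * p + 3) / 2))))) ≤ (2 * K) * N ^ (-(1/10:ℝ)) := by
    calc _ ≤ N ^ ((1 + 1 / (5 * p)) * (p - 1)) * (N ^ (p / 2 + 6 / 5) *
          (2 * (K * N ^ (-((3 * p + 3) / 2))))) := by gcongr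
      _ = (2 * K) * N ^ (((1 + 1 / (5 * p)) * (p - 1)) + (p / 2 + 6 / 5) + (-((3 * p + 3) / 2))) := by
          rw [Real.rpow_add hN0 _ (-((3 * p + 3) / 2)), Real.rpow_add hN0 _ (p / 2 + 6 / 5)]; ring
      _ ≤ _ := by
          gcongr 2 * K * ?_
          refine Real.rpow_le_rpow_of_exponent_le hN ?_
          have : (1 + 1 / (5 * p)) * (p - 1) = p - 1 + 1/5 - 1 / (5 * p) := by field_simp; ring
          have h5 : 0 < 1 / (5 * p) := by positivity
          rw [this]
          linarith
  refine (Real.rpow_le_rpow (by positivity) h1 (by positivity)).trans (le_of_eq ?_)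
  rw [Real.mul_rpow (by positivity) (by positivity), ← Real.rpow_mul hN0.le]
  congr 2
  field_simp

lemma upper_point {T : ℝ} (hT : 0 < T) {p : ℝ} (hp : 1 ≤ p) {H M : ℝ} (hH : 0 ≤ H) (hM0 : 0 ≤ M)
    (hHold : ∀ {d : ℕ} {f : ℝ → E d}, Good T f → pnorm T p f ≤ H * pnorm T (p + 1) f)
    {d m : ℕ} {n : ℕ} (hn : 1 ≤ n) (s : Fin (m+1) → ℝ) (x : Fin (m+1) → E d)
    (hm : ((m : ℝ) + 1) ≤ (n : ℝ) ^ ((1 : ℝ) + 1 / (5 * p)))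
    (hx : (∑ j, ‖x j‖ ^ p) ^ (1 / p) ≤ (n : ℝ) ^ ((1 : ℝ) / 2 + 6 / (5 * p)))
    (θ : Theta T d) {ℓ : ℝ → ℝ} (hℓ : ℓ ∈ LL T θ.t T)
    (hPhi : (n:ℝ) * Phi T p T (pcPath s x) θ ℓ ≤ 2 * M) :
    |θ.t - T| + pnorm T p (fun r => θ.path (min θ.t r) - pcPath s x r) ≤
      (2 * M) ^ ((3 * p + 3) / 2) * (n:ℝ) ^ (-((3 * p + 3) / 2)) +
      H * (2 * M) ^ (1 / (p + 1)) * (n:ℝ) ^ (-(1 / (p + 1))) +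
      (2 * (2 * M) ^ ((3 * p + 3) / 2)) ^ (1 / p) * (n:ℝ) ^ (-(1 / (10 * p))) := by
  obtain ⟨hmono, het, heT⟩ := LL_prop hT θ.ht hℓ
  have hp0 : 0 < p := by linarith
  have hN : (1:ℝ) ≤ n := by exact_mod_cast hn
  have hN0 : (0:ℝ) < n := by linarith
  have hPhi' : Phi T p T (pcPath s x) θ ℓ ≤ 2 * M / n := by
    rw [le_div_iff₀ hN0]; linarith
  unfold Phi at hPhi'
  have hs0 := supId_nonneg T ℓ
  have hgm : MonotoneOn (fun r => min T (ℓ r)) (Icc 0 T) := fun a ha b hb hab =>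
    min_le_min le_rfl (hmono ha hb hab)
  have hgood := good_pc s x hgm
  have hA : supId T ℓ ≤ (2 * M) ^ ((3 * p + 3) / 2) * (n:ℝ) ^ (-((3 * p + 3) / 2)) := by
    have h1 : (supId T ℓ) ^ (2 / (3 * p + 3)) ≤ 2 * M / n := by
      have := pnormPow_nonneg (q := p+1) hT (fun r => pcPath s x (min T (ℓ r)) - θ.path (min θ.t r))
      linarith
    have h2 := Real.rpow_le_rpow (by positivity) h1 (show 0 ≤ (3 * p + 3) / 2 by positivity)
    rw [← Real.rpow_mul hs0, show 2 / (3 * p + 3) * ((3 * p + 3) / 2) = 1 by field_simp,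
      Real.rpow_one, Real.div_rpow (by positivity) hN0.le, div_eq_mul_inv, ← Real.rpow_neg hN0.le] at h2
    exact h2
  have hB : pnorm T p (fun r => θ.path (min θ.t r) - pcPath s x (min T (ℓ r))) ≤
      H * (2 * M) ^ (1 / (p + 1)) * (n:ℝ) ^ (-(1 / (p + 1))) := by
    rw [pnorm_symm]
    refine (hHold (hgood.sub (good_theta θ))).trans ?_
    rw [mul_assoc]
    refine mul_le_mul_of_nonneg_left ?_ hH
    have h1 : pnormPow T (p+1) (fun r => pcPath s x (min T (ℓ r)) - θ.path (min θ.t r)) ≤ 2 * M / n := by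
      have := Real.rpow_nonneg hs0 (2 / (3 * p + 3))
      linarith
    unfold pnorm
    refine (Real.rpow_le_rpow (pnormPow_nonneg hT _) h1 (by positivity)).trans (le_of_eq ?_)
    rw [Real.div_rpow (by positivity) hN0.le, div_eq_mul_inv, ← Real.rpow_neg hN0.le]
  have hC : pnorm T p (fun r => pcPath s x (min T (ℓ r)) - pcPath s x r) ≤
      (2 * (2 * M) ^ ((3 * p + 3) / 2)) ^ (1 / p) * (n:ℝ) ^ (-(1 / (10 * p))) := by
    have h1 := pc_shift hT s x hp hs0 hgm (min_eq_left heT) (δ := supId T ℓ) (fun r hr => by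
      refine le_trans ?_ (le_supId hmono (Ioc_subset_Icc_self hr))
      rcases le_total T (ℓ r) with h | h
      · simp only [min_eq_left h]
        have := hr.2
        rw [abs_of_nonneg (by linarith), abs_of_nonneg (by linarith)]
        linarith
      · simp only [min_eq_right h]; exact le_rfl)
    refine le_trans ?_ (rpow_final hp hN (by positivity : 0 ≤ (2 * M) ^ ((3 * p + 3) / 2))
      (by positivity : 0 ≤ ∑ j, ‖x j‖ ^ p) (by positivity) hm hx)
    unfold pnorm
    refine Real.rpow_le_rpow (pnormPow_nonneg hT _) (h1.trans ?_) (by positivity)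
    gcongr
  have h1 : |θ.t - T| ≤ supId T ℓ := by
    have := le_supId hmono θ.ht
    rwa [het, abs_sub_comm] at this
  have h2 := pnorm_triangle hT (good_theta θ) hgood (good_pc' s x) hp
  linarith

/-- (Quantitative Lemma 5.6) There is `C > 0`, depending only on `T`, `p` and the
bound `M` on `u`, such that for every `n ≥ 1` and admissible data (`i = m+1 ≤
n^{1+1/(5p)}`, `|x_i|_p ≤ n^{1/2+6/(5p)}`):
`0 ≤ u^{n,λ_i}(T,x) - u^{λ_i}(T,x) ≤ ρ^u(C(n^{-(3p+3)/2} + n^{-1/(p+1)} + n^{-1/(10p)}))`. -/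
theorem stmt7 (T : ℝ) (hT : 0 < T) (d : ℕ) (hd : 1 ≤ d) (p : ℝ) (hp : 1 ≤ p) (M : ℝ) :
    ∃ C > 0, ∀ u : Theta T d → ℝ, (∀ θ : Theta T d, |u θ| ≤ M) →
    ∀ ρ : ℝ → ℝ, Monotone ρ →
      Filter.Tendsto ρ (nhdsWithin 0 (Set.Ioi 0)) (𝓝 0) →
      (∀ θ θ' : Theta T d, |u θ - u θ'| ≤ ρ (dpDist T p θ θ')) →
    ∀ n : ℕ, 1 ≤ n →
    ∀ (m : ℕ) (sVec : Fin (m + 1) → ℝ) (xVec : Fin (m + 1) → E d),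
      sVec 0 = 0 → StrictMono sVec → sVec (Fin.last m) ≤ T →
      ((m : ℝ) + 1) ≤ (n : ℝ) ^ ((1 : ℝ) + 1 / (5 * p)) →
      (∑ j, ‖xVec j‖ ^ p) ^ (1 / p) ≤ (n : ℝ) ^ ((1 : ℝ) / 2 + 6 / (5 * p)) →
    ∀ L : ℝ, IsExtValue T p u (pcPath sVec xVec) L →
      0 ≤ reg T p u n T (pcPath sVec xVec) - L ∧
      reg T p u n T (pcPath sVec xVec) - L ≤
        ρ (C * ((n : ℝ) ^ (-((3 * p + 3) / 2)) + (n : ℝ) ^ (-(1 / (p + 1)))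
          + (n : ℝ) ^ (-(1 / (10 * p))))) := by
  obtain ⟨H, hH, hHold⟩ := pnorm_holder hT hp
  set K1 := (2 * |M|) ^ ((3 * p + 3) / 2) with hK1
  set K2 := H * (2 * |M|) ^ (1 / (p + 1)) with hK2
  set K3 := (2 * K1) ^ (1 / p) with hK3
  have hK1' : 0 ≤ K1 := by positivity
  have hK2' : 0 ≤ K2 := by positivity
  have hK3' : 0 ≤ K3 := by positivity
  refine ⟨K1 + K2 + K3 + 1, by positivity, ?_⟩
  intro u hM ρ hm hρ hu n hn m s x hs0 hs hsT hmn hx L hL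
  have hN0 : (0:ℝ) < n := by exact_mod_cast hn
  have hp0 : 0 < p := by linarith
  have hρ0 : 0 ≤ ρ 0 := by
    have := hu (atheta hT s x 0) (atheta hT s x 0)
    have e : dpDist T p (atheta hT s x 0) (atheta hT s x 0) = 0 := by
      simp [dpDist, pnorm, pnormPow, Real.zero_rpow hp0.ne', Real.zero_rpow (inv_ne_zero hp0.ne')]
    rw [e] at this
    exact (abs_nonneg _).trans this
  have hlow := lower hT hp hM hm hρ hρ0 hu n s x hL
  refine ⟨by linarith, ?_⟩
  set A := (n : ℝ) ^ (-((3 * p + 3) / 2)) with hA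
  set B := (n : ℝ) ^ (-(1 / (p + 1))) with hB
  set D := (n : ℝ) ^ (-(1 / (10 * p))) with hD
  have hA0 : 0 < A := by positivity
  have hB0 : 0 < B := by positivity
  have hD0 : 0 < D := by positivity
  have hRR : 0 ≤ ρ ((K1 + K2 + K3 + 1) * (A + B + D)) := hρ0.trans (hm (by positivity))
  rw [sub_le_iff_le_add]
  unfold reg
  refine csSup_le ⟨_, atheta hT s x 0, id, ?_, id_mem_LL hT, rfl⟩ ?_
  · intro hh
    exact hT.ne' (congrArg Prod.fst hh)
  rintro _ ⟨θ, ℓ, -, hℓ, rfl⟩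
  have hPn := mul_nonneg hN0.le (Phi_nonneg hT p T (pcPath s x) θ ℓ)
  by_cases hc : u θ - n * Phi T p T (pcPath s x) θ ℓ ≤ L
  · linarith
  rw [not_le] at hc
  obtain ⟨θk, ht, h1, h2⟩ := hL
  have hLM : -|M| ≤ L := by
    refine ge_of_tendsto' h2 fun k => ?_
    have := (abs_le.1 (hM (θk k))).1
    have := le_abs_self M
    linarith
  have hPhi : (n:ℝ) * Phi T p T (pcPath s x) θ ℓ ≤ 2 * |M| := by
    have := (abs_le.1 (hM θ)).2
    have := le_abs_self M
    linarith
  have hup := upper_point hT hp hH (abs_nonneg M) hHold hn s x hmn hx θ hℓ hPhi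
  have hlim : Tendsto (fun k => u θ - u (θk k)) atTop (𝓝 (u θ - L)) := tendsto_const_nhds.sub h2
  have : u θ - L ≤ ρ ((K1 + K2 + K3 + 1) * (A + B + D)) := by
    refine le_of_tendsto hlim ?_
    filter_upwards [h1.eventually (gt_mem_nhds (show 0 < A + B + D by positivity))] with k hk
    refine (le_abs_self _).trans ((hu θ (θk k)).trans (hm ?_))
    unfold dpDist
    have e : pnorm T p (fun r => θ.path (min θ.t r) - (θk k).path (min (θk k).t r)) =
        pnorm T p (fun r => θ.path (min θ.t r) - (θk k).path r) := by
      refine pnorm_congr hT fun r hr => ?_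
      rw [ht k, min_eq_right hr.2]
    rw [e, ht k]
    have h3 := pnorm_triangle hT (good_theta θ) (good_pc' s x) (good_path (θk k)) hp
    have h4 : K1 * A + K2 * B + K3 * D + (A + B + D) ≤ (K1 + K2 + K3 + 1) * (A + B + D) := by
      have : 0 ≤ K1 * (B + D) + K2 * (A + D) + K3 * (A + B) := by positivity
      linarith
    linarith
  linarith
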